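/- For every ε > 0 there exists r0 such that for all r ≥ r0: every r-partite intersecting hypergraph with cover number at least r-1 has at least (3 - 1/√18 - ε)·r edges. -/

import Mathlib

/-!
The proof is greedy, in four phases. For `k = 4, 3, 2, 1` in turn, vertices of degree greater than `k`
in the family of edges not yet covered are selected as long as there are any (`greedy`). A phase
that selects `t` vertices removes at least `(k + 1) t` edges. The point is that the phases with
large `k` cannot stop early.

Suppose that `F` is intersecting and `r`-partite, has `m` edges and all degrees at most `k`, and
needs at least `s` vertices to be covered. Every class is a cover of `F`, so it has at least `s` vertices
of positive degree, while its degrees sum to `m`. Summing `(d - 1) (k - d) ≥ 0` over the class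
bounds its `∑ d (d - 1)` by `k (m - s)`. On the other hand any two distinct edges meet, so
`∑ d (d - 1)` over all vertices is at least `m (m - 1)`. Hence `m (m - 1) ≤ r k (m - s)`
(`card_mul_le`), where `s ≥ r - 1 - t` if `t` vertices have been selected so far.

Replacing `m ^ 2` by a tangent line makes these constraints linear (`linear_bound`). For `k = 1` the
residual family has at most one edge. The resulting linear program shows that, for
`r` large, fewer than `2.7643 r` edges can be covered by fewer than `r - 1` vertices; and
`3 - 1 / √18 < 2.7643`.
-/


/-- `E` is an `r`-partite hypergraph with vertex-class map `p`:
every edge contains exactly one vertex from each class. -/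
def Rpartite {V : Type*} (r : ℕ) (p : V → Fin r) (E : Finset (Finset V)) : Prop :=
  ∀ e ∈ E, ∀ i : Fin r, ∃! v, v ∈ e ∧ p v = i

/-- Every two edges share a vertex. -/
def Intersecting {V : Type*} (E : Finset (Finset V)) : Prop :=
  ∀ e ∈ E, ∀ f ∈ E, ∃ v, v ∈ e ∧ v ∈ f

/-- `C` meets every edge of `E`. -/
def IsCover {V : Type*} (E : Finset (Finset V)) (C : Finset V) : Prop :=
  ∀ e ∈ E, ∃ v ∈ C, v ∈ e

/-- The degree of a vertex: the number of edges containing it. -/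
def degree {V : Type*} [DecidableEq V] (E : Finset (Finset V)) (v : V) : ℕ :=
  (E.filter (fun e => v ∈ e)).card

/-- Greedy selection: `T` is obtained by repeatedly taking a vertex of degree more than `k` among the
edges not yet covered, and `F` is the family that remains uncovered. -/
lemma greedy {V : Type} [DecidableEq V] (k : ℕ) (E : Finset (Finset V)) :
    ∃ F ⊆ E, ∃ T : Finset V, (∀ e ∈ E, e ∈ F ∨ ∃ v ∈ T, v ∈ e) ∧
      (k + 1) * T.card + F.card ≤ E.card ∧ ∀ v, degree F v ≤ k := by
  induction E using Finset.strongInduction with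
  | H E ih =>
    by_cases h : ∀ v, degree E v ≤ k
    · exact ⟨E, subset_rfl, ∅, fun e he => Or.inl he, by simp, h⟩
    · push Not at h
      obtain ⟨v, hv⟩ := h
      have hc := Finset.card_filter_add_card_filter_not (s := E) (fun e => v ∈ e)
      unfold degree at hv
      have hss : E.filter (fun e => v ∉ e) ⊂ E := by
        refine Finset.ssubset_iff_subset_ne.2 ⟨Finset.filter_subset _ _, fun h => ?_⟩
        rw [h] at hc
        omega
      obtain ⟨F, hF, T, h1, h2, h3⟩ := ih _ hss
      refine ⟨F, hF.trans hss.subset, insert v T, fun e he => ?_, ?_, h3⟩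
      · by_cases hve : v ∈ e
        · exact Or.inr ⟨v, Finset.mem_insert_self _ _, hve⟩
        · rcases h1 e (Finset.mem_filter.2 ⟨he, hve⟩) with h | ⟨w, hw, hwe⟩
          · exact Or.inl h
          · exact Or.inr ⟨w, Finset.mem_insert_of_mem hw, hwe⟩
      · have := Finset.card_insert_le v T
        have h4 : (k + 1) * (insert v T).card ≤ (k + 1) * (T.card + 1) :=
          Nat.mul_le_mul_left _ this
        rw [Nat.mul_add, Nat.mul_one] at h4
        omega

/-- In an intersecting family every ordered pair of distinct edges is seen from some common
vertex. -/
lemma pair_count {V : Type} [DecidableEq V] (F : Finset (Finset V)) (hI : Intersecting F) :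
    F.card * F.card - F.card ≤
      ∑ v ∈ F.biUnion id, (degree F v * degree F v - degree F v) := by
  have hsub : F.offDiag ⊆
      (F.biUnion id).biUnion (fun v => (F.filter (fun e => v ∈ e)).offDiag) := by
    rintro ⟨e, f⟩ h
    obtain ⟨he, hf, hne⟩ := Finset.mem_offDiag.1 h
    obtain ⟨v, hve, hvf⟩ := hI e he f hf
    refine Finset.mem_biUnion.2 ⟨v, Finset.mem_biUnion.2 ⟨e, he, hve⟩, ?_⟩
    exact Finset.mem_offDiag.2
      ⟨Finset.mem_filter.2 ⟨he, hve⟩, Finset.mem_filter.2 ⟨hf, hvf⟩, hne⟩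
  have h := (Finset.card_le_card hsub).trans Finset.card_biUnion_le
  simpa [Finset.offDiag_card, degree] using h

/-- Each edge has exactly one vertex in a given class. -/
lemma sum_degree_class {V : Type} [DecidableEq V] {r : ℕ} {p : V → Fin r}
    {F : Finset (Finset V)} (hP : Rpartite r p F) (i : Fin r) :
    ∑ v ∈ (F.biUnion id).filter (fun v => p v = i), degree F v = F.card := by
  have h : ∀ e ∈ F,
      (((F.biUnion id).filter (fun v => p v = i)).filter (fun v => v ∈ e)).card = 1 := by
    intro e he
    obtain ⟨v, ⟨hve, hvi⟩, hu⟩ := hP e he i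
    refine Finset.card_eq_one.2 ⟨v, ?_⟩
    ext w
    simp only [Finset.mem_filter, Finset.mem_biUnion, Finset.mem_singleton, id]
    constructor
    · rintro ⟨⟨-, hw⟩, hwe⟩
      exact hu w ⟨hwe, hw⟩
    · rintro rfl
      exact ⟨⟨⟨e, he, hve⟩, hvi⟩, hve⟩
  have h2 := Finset.sum_card_bipartiteAbove_eq_sum_card_bipartiteBelow
    (s := (F.biUnion id).filter (fun v => p v = i)) (t := F) (fun v e => v ∈ e)
  simp only [Finset.bipartiteAbove, Finset.bipartiteBelow] at h2
  unfold degree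
  rw [h2, Finset.sum_congr rfl h]
  simp

/-- The main inequality: bounded degrees and a large cover number force a small family. -/
lemma card_mul_le {V : Type} [DecidableEq V] {r : ℕ} {p : V → Fin r}
    {F : Finset (Finset V)} (hP : Rpartite r p F) (hI : Intersecting F) {k : ℕ}
    (hk : ∀ v, degree F v ≤ k) {s : ℝ} (hs : ∀ C, IsCover F C → s ≤ C.card) :
    (F.card : ℝ) * (F.card - 1) ≤ r * (k * (F.card - s)) := by
  have hpair : (F.card : ℝ) * (F.card - 1) ≤
      ∑ v ∈ F.biUnion id, (degree F v : ℝ) * (degree F v - 1) := by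
    have h : ((F.card * F.card - F.card : ℕ) : ℝ) ≤
        ((∑ v ∈ F.biUnion id, (degree F v * degree F v - degree F v) : ℕ) : ℝ) :=
      Nat.cast_le.2 (pair_count F hI)
    have hcast : ∀ n : ℕ, ((n * n - n : ℕ) : ℝ) = (n : ℝ) * (n - 1) := fun n => by
      rw [Nat.cast_sub (Nat.le_mul_self n)]
      push_cast
      ring
    rw [Nat.cast_sum, hcast] at h
    simpa only [hcast] using h
  have hclass : ∀ i : Fin r, ∑ v ∈ (F.biUnion id).filter (fun v => p v = i),
      (degree F v : ℝ) * (degree F v - 1) ≤ k * (F.card - s) := by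
    intro i
    have hcov : s ≤ ((F.biUnion id).filter (fun v => p v = i)).card := by
      refine hs _ fun e he => ?_
      obtain ⟨v, ⟨hve, hvi⟩, -⟩ := hP e he i
      exact ⟨v, Finset.mem_filter.2 ⟨Finset.mem_biUnion.2 ⟨e, he, hve⟩, hvi⟩, hve⟩
    have hsum : ∑ v ∈ (F.biUnion id).filter (fun v => p v = i), (degree F v : ℝ) = F.card := by
      exact_mod_cast sum_degree_class hP i
    have hle : ∑ v ∈ (F.biUnion id).filter (fun v => p v = i),
        (degree F v : ℝ) * (degree F v - 1) ≤
        ∑ v ∈ (F.biUnion id).filter (fun v => p v = i), ((k : ℝ) * degree F v - k) := by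
      refine Finset.sum_le_sum fun v hv => ?_
      have h1 : (1 : ℝ) ≤ degree F v := by
        obtain ⟨e, he, hve⟩ := Finset.mem_biUnion.1 (Finset.mem_filter.1 hv).1
        have : 0 < degree F v := Finset.card_pos.2 ⟨e, Finset.mem_filter.2 ⟨he, hve⟩⟩
        exact_mod_cast this
      have h2 : (degree F v : ℝ) ≤ k := by exact_mod_cast hk v
      nlinarith
    rw [Finset.sum_sub_distrib, ← Finset.mul_sum, hsum, Finset.sum_const, nsmul_eq_mul] at hle
    have hk0 : (0 : ℝ) ≤ k := k.cast_nonneg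
    nlinarith [mul_le_mul_of_nonneg_left hcov hk0]
  refine hpair.trans ?_
  rw [← Finset.sum_fiberwise (F.biUnion id) p]
  refine (Finset.sum_le_sum fun i _ => hclass i).trans ?_
  simp

/-- An intersecting family in which no vertex lies in two edges has at most one edge. -/
lemma card_le_one_of_degree {V : Type} [DecidableEq V] {F : Finset (Finset V)}
    (hI : Intersecting F) (hk : ∀ v, degree F v ≤ 1) : F.card ≤ 1 := by
  rw [Finset.card_le_one]
  intro e he f hf
  obtain ⟨v, hve, hvf⟩ := hI e he f hf
  exact Finset.card_le_one.1 (hk v) e (Finset.mem_filter.2 ⟨he, hve⟩) f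
    (Finset.mem_filter.2 ⟨hf, hvf⟩)

/-- The main inequality divided by `r`, with `m ^ 2` replaced by its tangent at `a * r` and the lower
order term `m` by `3 * r`. -/
lemma linear_bound {m r k s : ℝ} (a : ℝ) (hr : 0 < r) (hm : m ≤ 3 * r)
    (h : m * (m - 1) ≤ r * (k * (m - s))) :
    2 * a * m - a ^ 2 * r - 3 ≤ k * (m - s) := by
  refine le_of_mul_le_mul_left ?_ hr
  nlinarith [sq_nonneg (m - a * r)]

theorem stmt19 : ∀ ε : ℝ, 0 < ε → ∃ r0 : ℕ, ∀ r : ℕ, r0 ≤ r →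
    ∀ (V : Type) (p : V → Fin r) (E : Finset (Finset V)),
      Rpartite r p E → Intersecting E →
      (∀ C : Finset V, IsCover E C → r - 1 ≤ C.card) →
      (3 - 1 / Real.sqrt 18 - ε) * r ≤ E.card := by
  classical
  intro ε hε
  refine ⟨10000, fun r hr V p E hP hI hC => ?_⟩
  have hr' : (10000 : ℝ) ≤ r := by exact_mod_cast hr
  have hr0 : (0 : ℝ) < r := by linarith
  have hconst : 3 - 1 / Real.sqrt 18 ≤ 2.7643 := by
    have h18 : Real.sqrt 18 ≤ 4.24265 := Real.sqrt_le_iff.2 (by norm_num)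
    have hpos : 0 < Real.sqrt 18 := Real.sqrt_pos.2 (by norm_num)
    have : 0.2357 ≤ 1 / Real.sqrt 18 := by
      rw [le_div_iff₀ hpos]
      linarith
    linarith
  by_contra hcon
  have hm : (E.card : ℝ) < 2.7643 * r := by
    have : (3 - 1 / Real.sqrt 18 - ε) * r ≤ 2.7643 * r :=
      mul_le_mul_of_nonneg_right (by linarith) hr0.le
    linarith
  obtain ⟨F₄, hF₄, T₄, hT₄, hc₄, hd₄⟩ := greedy 4 E
  obtain ⟨F₃, hF₃, T₃, hT₃, hc₃, hd₃⟩ := greedy 3 F₄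
  obtain ⟨F₂, hF₂, T₂, hT₂, hc₂, hd₂⟩ := greedy 2 F₃
  obtain ⟨F₁, hF₁, T₁, hT₁, hc₁, hd₁⟩ := greedy 1 F₂
  have extend : ∀ {A B : Finset (Finset V)} {T : Finset V} {s : ℝ},
      (∀ e ∈ A, e ∈ B ∨ ∃ v ∈ T, v ∈ e) → (∀ C, IsCover A C → s ≤ C.card) →
      ∀ C, IsCover B C → s - T.card ≤ C.card := by
    intro A B T s hT hA C hCB
    have h1 : s ≤ (C ∪ T).card := by
      refine hA _ fun e he => ?_
      rcases hT e he with h | ⟨v, hv, hve⟩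
      · obtain ⟨v, hv, hve⟩ := hCB e h
        exact ⟨v, Finset.mem_union_left _ hv, hve⟩
      · exact ⟨v, Finset.mem_union_right _ hv, hve⟩
    have h2 : ((C ∪ T).card : ℝ) ≤ C.card + T.card := by
      exact_mod_cast Finset.card_union_le C T
    linarith
  have hs : ∀ C, IsCover E C → (r : ℝ) - 1 ≤ C.card := by
    intro C h
    have : r ≤ C.card + 1 := by have := hC C h; omega
    have : (r : ℝ) ≤ C.card + 1 := by exact_mod_cast this
    linarith
  have hs₄ := extend hT₄ hs
  have hs₃ := extend hT₃ hs₄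
  have hs₂ := extend hT₂ hs₃
  have hs₁ := extend hT₁ hs₂
  have hE₃ := hF₃.trans hF₄
  have hE₂ := hF₂.trans hE₃
  have hE₁ := hF₁.trans hE₂
  have restrictP : ∀ {F}, F ⊆ E → Rpartite r p F := fun h e he => hP e (h he)
  have restrictI : ∀ {F}, F ⊆ E → Intersecting F :=
    fun h e he f hf => hI e (h he) f (h hf)
  have small : ∀ {F}, F ⊆ E → (F.card : ℝ) ≤ 3 * r := by
    intro F h
    have : (F.card : ℝ) ≤ E.card := by exact_mod_cast Finset.card_le_card h
    linarith
  -- The points of tangency are close to the sizes (in units of `r`) of the residual families in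
  -- the extremal case, where each phase selects as few vertices as the main inequality permits.
  have b₄ := linear_bound 2.48 hr0 (small hF₄)
    (card_mul_le (restrictP hF₄) (restrictI hF₄) hd₄ hs₄)
  have b₃ := linear_bound 1.67 hr0 (small hE₃)
    (card_mul_le (restrictP hE₃) (restrictI hE₃) hd₃ hs₃)
  have b₂ := linear_bound 0.94 hr0 (small hE₂)
    (card_mul_le (restrictP hE₂) (restrictI hE₂) hd₂ hs₂)
  -- The last family consists of at most one edge, so one vertex covers it.
  have b₁ : (r : ℝ) - 1 - T₄.card - T₃.card - T₂.card - T₁.card ≤ 1 := by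
    have h1 := card_le_one_of_degree (restrictI hE₁) hd₁
    have hcov : ∃ C : Finset V, IsCover F₁ C ∧ C.card ≤ 1 := by
      rcases F₁.eq_empty_or_nonempty with h | ⟨e, he⟩
      · exact ⟨∅, by simp [IsCover, h], by simp⟩
      · obtain ⟨v, hv, -⟩ := restrictI hE₁ e he e he
        refine ⟨{v}, fun f hf => ⟨v, by simp, ?_⟩, by simp⟩
        rwa [Finset.card_le_one.1 h1 f hf e he]
    obtain ⟨C, hC1, hC2⟩ := hcov
    have : (C.card : ℝ) ≤ 1 := by exact_mod_cast hC2
    exact (hs₁ C hC1).trans this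
  have c₄ : (5 : ℝ) * T₄.card + F₄.card ≤ E.card := by exact_mod_cast hc₄
  have c₃ : (4 : ℝ) * T₃.card + F₃.card ≤ F₄.card := by exact_mod_cast hc₃
  have c₂ : (3 : ℝ) * T₂.card + F₂.card ≤ F₃.card := by exact_mod_cast hc₂
  have c₁ : (2 : ℝ) * T₁.card + F₁.card ≤ F₂.card := by exact_mod_cast hc₁
  have n₁ : (0 : ℝ) ≤ F₁.card := Nat.cast_nonneg _
  push_cast at b₄ b₃ b₂
  linarith
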